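/- Let D be a *-IRKT. Then D is an AGCD domain if and only if for every *-super homogeneous ideal A of D there is a positive integer n such that (Aⁿ)* is a principal ideal. -/

import Mathlib

open scoped nonZeroDivisors

/-- A star operation on the nonzero fractional ideals of an integral domain `D`
with quotient field `K`: it fixes nonzero principal fractional ideals, commutes with
multiplication by nonzero principal fractional ideals, is extensive, monotone and
idempotent (on nonzero fractional ideals). -/
structure StarOperation (D K : Type*) [CommRing D] [IsDomain D] [Field K]
    [Algebra D K] [IsFractionRing D K] where
  star : FractionalIdeal D⁰ K → FractionalIdeal D⁰ K
  star_spanSingleton : ∀ x : K, x ≠ 0 →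
    star (FractionalIdeal.spanSingleton D⁰ x) = FractionalIdeal.spanSingleton D⁰ x
  star_smul : ∀ (x : K) (I : FractionalIdeal D⁰ K), x ≠ 0 → I ≠ 0 →
    star (FractionalIdeal.spanSingleton D⁰ x * I) = FractionalIdeal.spanSingleton D⁰ x * star I
  le_star : ∀ I : FractionalIdeal D⁰ K, I ≠ 0 → I ≤ star I
  star_mono : ∀ I J : FractionalIdeal D⁰ K, I ≠ 0 → J ≠ 0 → I ≤ J → star I ≤ star J
  star_idem : ∀ I : FractionalIdeal D⁰ K, I ≠ 0 → star (star I) = star I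

namespace StarOperation

variable {D K : Type*} [CommRing D] [IsDomain D] [Field K] [Algebra D K] [IsFractionRing D K]
variable (s : StarOperation D K)

/-- `*` has finite character: for every nonzero fractional ideal `I`, `I^*` is the union
of `J^*` over the nonzero finitely generated fractional subideals `J` of `I`. -/
def FiniteCharacter : Prop :=
  ∀ I : FractionalIdeal D⁰ K, I ≠ 0 → ∀ x ∈ s.star I,
    ∃ J : FractionalIdeal D⁰ K, J ≠ 0 ∧ (J : Submodule D K).FG ∧ J ≤ I ∧ x ∈ s.star J

/-- A (nonzero) integral ideal `I` of `D` is a `*`-ideal if `I^* = I`. -/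
def IsStarIdeal (I : Ideal D) : Prop :=
  I ≠ ⊥ ∧ s.star (I : FractionalIdeal D⁰ K) = (I : FractionalIdeal D⁰ K)

/-- An integral ideal `I` of `D` is a `*`-ideal of finite type if `I = J^*` for some
nonzero finitely generated ideal `J`. -/
def IsFiniteTypeStarIdeal (I : Ideal D) : Prop :=
  ∃ J : Ideal D, J ≠ ⊥ ∧ J.FG ∧
    s.star (J : FractionalIdeal D⁰ K) = (I : FractionalIdeal D⁰ K)

/-- A maximal `*`-ideal: maximal among proper integral `*`-ideals. -/
def IsMaxStarIdeal (M : Ideal D) : Prop :=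
  M ≠ ⊤ ∧ s.IsStarIdeal M ∧ ∀ J : Ideal D, J ≠ ⊤ → s.IsStarIdeal J → M ≤ J → J = M

/-- `I` is `*`-homogeneous: a proper `*`-ideal of finite type such that `(J + J')^* ≠ D`
for every pair `J`, `J'` of proper `*`-ideals of finite type containing `I`. -/
def IsHomog (I : Ideal D) : Prop :=
  I ≠ ⊤ ∧ s.IsStarIdeal I ∧ s.IsFiniteTypeStarIdeal I ∧
    ∀ J J' : Ideal D, J ≠ ⊤ → J' ≠ ⊤ → s.IsStarIdeal J → s.IsStarIdeal J' →
      s.IsFiniteTypeStarIdeal J → s.IsFiniteTypeStarIdeal J' → I ≤ J → I ≤ J' →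
      s.star ((J + J' : Ideal D) : FractionalIdeal D⁰ K) ≠ 1

/-- The set `M(I) = {x ∈ D : (xD + I)^* ≠ D}` attached to an ideal `I`. -/
def MSet (I : Ideal D) : Set D :=
  {x : D | s.star ((Ideal.span {x} + I : Ideal D) : FractionalIdeal D⁰ K) ≠ 1}

/-- `A` and `B` are `*`-comaximal if `(A + B)^* = D`. -/
def StarComaximal (A B : Ideal D) : Prop :=
  s.star ((A + B : Ideal D) : FractionalIdeal D⁰ K) = 1

/-- An integral ideal `I` is `*`-invertible if `(I · I⁻¹)^* = D`. -/
def StarInvertible (I : Ideal D) : Prop :=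
  s.star ((I : FractionalIdeal D⁰ K) * (I : FractionalIdeal D⁰ K)⁻¹) = 1

/-- `D` is a `*`-SH domain: every principal ideal generated by a nonzero nonunit is a
`*`-product of finitely many `*`-homogeneous ideals. -/
def IsSHDomain : Prop :=
  ∀ x : D, x ≠ 0 → ¬IsUnit x →
    ∃ T : Multiset (Ideal D), (∀ J ∈ T, s.IsHomog J) ∧
      s.star ((T.prod : Ideal D) : FractionalIdeal D⁰ K) =
        ((Ideal.span {x} : Ideal D) : FractionalIdeal D⁰ K)

/-- `D` has finite `*`-character: every nonzero nonunit lies in only finitely many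
maximal `*`-ideals. -/
def FiniteStarCharacter : Prop :=
  ∀ x : D, x ≠ 0 → ¬IsUnit x → {P : Ideal D | s.IsMaxStarIdeal P ∧ x ∈ P}.Finite

end StarOperation

namespace StarOperation

variable {D K : Type*} [CommRing D] [IsDomain D] [Field K] [Algebra D K] [IsFractionRing D K]

/-- A `*`-homogeneous ideal `I` is `*`-super homogeneous if every `*`-ideal of finite
type containing `I` is `*`-invertible. -/
def IsSuperHomog (s : StarOperation D K) (I : Ideal D) : Prop :=
  s.IsHomog I ∧ ∀ J : Ideal D, s.IsStarIdeal J → s.IsFiniteTypeStarIdeal J → I ≤ J →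
    s.StarInvertible J

/-- `D` is a `*`-independent ring of Krull type: localizations at maximal `*`-ideals are
valuation domains, `D` is the locally finite intersection of these localizations (inside
`K`), and no two distinct maximal `*`-ideals contain a common nonzero prime ideal. -/
def IsIRKT (s : StarOperation D K) : Prop :=
  (∀ (P : Ideal D) [P.IsPrime], s.IsMaxStarIdeal P →
    ValuationRing (Localization.AtPrime P)) ∧
  (∀ x : K, (∀ P : Ideal D, s.IsMaxStarIdeal P →
      ∃ a t : D, t ∉ P ∧ x * algebraMap D K t = algebraMap D K a) →
    ∃ d : D, algebraMap D K d = x) ∧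
  s.FiniteStarCharacter ∧
  (∀ P Q : Ideal D, s.IsMaxStarIdeal P → s.IsMaxStarIdeal Q → P ≠ Q →
    ∀ L : Ideal D, L.IsPrime → L ≠ ⊥ → ¬(L ≤ P ⊓ Q))

end StarOperation

/-
Since `*` has finite character, `J^*` is determined by the localizations of `J` at the maximal
`*`-ideals. When these localizations are valuation domains their ideals are totally ordered, so
`((I + J)ⁿ)^* = (Iⁿ + Jⁿ)^*` and `((I + J)(I ∩ J))^* = (IJ)^*` can be checked locally. The second
identity says that `aD ∩ bD` is principal exactly when `(aD + bD)^*` is, and with the first it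
follows that `D` is an AGCD domain iff every finitely generated ideal has a principal `*`-power.
Independence of the maximal `*`-ideals makes the closure of a nonzero finitely generated ideal a
finite `*`-product of `*`-super homogeneous ideals, one for each maximal `*`-ideal above it, so it
is enough to have principal `*`-powers for those.
-/

section Localization

variable {R : Type*} [CommRing R]

/-- The extension `I R_P` of an ideal `I` to the localization of `R` at the prime `P`. -/
abbrev localize (P : Ideal R) [P.IsPrime] (I : Ideal R) : Ideal (Localization.AtPrime P) :=
  I.map (algebraMap R (Localization.AtPrime P))

lemma algebraMap_mem_localize {P : Ideal R} [P.IsPrime] {I : Ideal R} {x : R} :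
    algebraMap R (Localization.AtPrime P) x ∈ localize P I ↔ ∃ t ∉ P, t * x ∈ I :=
  IsLocalization.algebraMap_mem_map_algebraMap_iff P.primeCompl _ I x

lemma localize_eq_top_iff {P : Ideal R} [P.IsPrime] {I : Ideal R} :
    localize P I = ⊤ ↔ ¬ I ≤ P := by
  rw [Ideal.eq_top_iff_one, ← map_one (algebraMap R _), algebraMap_mem_localize,
    SetLike.not_le_iff_exists]
  simp only [mul_one, and_comm]

lemma exists_span_singleton_mul_le {P : Ideal R} [P.IsPrime] {I J : Ideal R} (hI : I.FG)
    (h : localize P I ≤ localize P J) : ∃ t ∉ P, Ideal.span {t} * I ≤ J := by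
  induction I, hI using Submodule.fg_induction with
  | singleton x =>
    obtain ⟨t, ht, htx⟩ := algebraMap_mem_localize.1
      (h (Ideal.mem_map_of_mem _ (Ideal.mem_span_singleton_self x)))
    refine ⟨t, ht, ?_⟩
    rwa [Ideal.submodule_span_eq, Ideal.span_singleton_mul_span_singleton,
      Ideal.span_singleton_le_iff_mem]
  | sup I₁ I₂ _ _ ih₁ ih₂ =>
    obtain ⟨t₁, ht₁, h₁⟩ := ih₁ ((Ideal.map_mono le_sup_left).trans h)
    obtain ⟨t₂, ht₂, h₂⟩ := ih₂ ((Ideal.map_mono le_sup_right).trans h)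
    refine ⟨t₁ * t₂, P.primeCompl.mul_mem ht₁ ht₂, ?_⟩
    rw [← Ideal.span_singleton_mul_span_singleton, Ideal.mul_sup, sup_le_iff]
    exact ⟨(Ideal.mul_mono_left Ideal.mul_le_left).trans h₁,
      (Ideal.mul_mono_left Ideal.mul_le_right).trans h₂⟩

lemma exists_mem_localize_eq_span_singleton {P : Ideal R} [P.IsPrime]
    [IsBezout (Localization.AtPrime P)] {I : Ideal R} (hI : I.FG) :
    ∃ a ∈ I, localize P I = localize P (Ideal.span {a}) := by
  obtain ⟨g, hg⟩ := IsBezout.isPrincipal_of_FG _ (hI.map (algebraMap R (Localization.AtPrime P)))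
  have hgI : g ∈ localize P I := by
    rw [localize, hg]
    exact Submodule.mem_span_singleton_self g
  obtain ⟨⟨a, t⟩, hat⟩ := (IsLocalization.mem_map_algebraMap_iff P.primeCompl _).1 hgI
  have ht := IsLocalization.map_units (Localization.AtPrime P) t
  refine ⟨a, a.2, ?_⟩
  rw [localize, localize, Ideal.map_span, Set.image_singleton, ← hat,
    Ideal.span_singleton_mul_right_unit ht, hg]

/-- If `J` contained no product `u * t` with `u ∉ P` and `t ∉ Q`, it would lie in a prime contained
in both `P` and `Q`. -/
lemma exists_notMem_algebraMap_mem_localize {P Q : Ideal R} [P.IsPrime] [Q.IsPrime]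
    (hPQ : ∀ L : Ideal R, L.IsPrime → L ≠ ⊥ → ¬ L ≤ P ⊓ Q) {J : Ideal R} (hJ : J ≠ ⊥) :
    ∃ t ∉ Q, algebraMap R (Localization.AtPrime P) t ∈ localize P J := by
  by_contra! hQ
  have hdisj : Disjoint (J : Set R) (P.primeCompl ⊔ Q.primeCompl : Submonoid R) := by
    rw [Set.disjoint_left]
    intro z hzJ hz
    obtain ⟨u, hu, t, ht, rfl⟩ := Submonoid.mem_sup.1 hz
    exact hQ t ht (algebraMap_mem_localize.2 ⟨u, hu, hzJ⟩)
  obtain ⟨L, hL, hJL, hLdisj⟩ := Ideal.exists_le_prime_disjoint J _ hdisj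
  have hLP : L ≤ P := fun x hx => by
    by_contra hxP
    exact Set.disjoint_left.1 hLdisj hx (Submonoid.mem_sup_left (S := P.primeCompl) hxP)
  have hLQ : L ≤ Q := fun x hx => by
    by_contra hxQ
    exact Set.disjoint_left.1 hLdisj hx (Submonoid.mem_sup_right (T := Q.primeCompl) hxQ)
  exact hPQ L hL (ne_bot_of_le_ne_bot hJ hJL) (le_inf hLP hLQ)

lemma sup_pow_of_preValuationRing [PreValuationRing R] (I J : Ideal R) (n : ℕ) :
    (I ⊔ J) ^ n = I ^ n ⊔ J ^ n := by
  rcases (ValuationRing.le_total_ideal R).total I J with h | h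
  · rw [sup_eq_right.2 h, sup_eq_right.2 (Ideal.pow_right_mono h n)]
  · rw [sup_eq_left.2 h, sup_eq_left.2 (Ideal.pow_right_mono h n)]

lemma sup_mul_inf_of_preValuationRing [PreValuationRing R] (I J : Ideal R) :
    (I ⊔ J) * (I ⊓ J) = I * J := by
  rcases (ValuationRing.le_total_ideal R).total I J with h | h
  · rw [sup_eq_right.2 h, inf_eq_left.2 h, mul_comm]
  · rw [sup_eq_left.2 h, inf_eq_right.2 h]

end Localization

/-- `D` is an almost GCD domain: any two nonzero elements have powers with a least common
multiple. -/
def IsAGCDDomain (D : Type*) [CommRing D] : Prop :=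
  ∀ a b : D, a ≠ 0 → b ≠ 0 → ∃ n : ℕ, 0 < n ∧
    (Ideal.span {a ^ n} ⊓ Ideal.span {b ^ n} : Ideal D).IsPrincipal

lemma algebraMap_mem_mul_inv {D : Type*} (K : Type*) [CommRing D] [IsDomain D] [Field K]
    [Algebra D K] [IsFractionRing D K] {I : Ideal D} {a t : D} (ha : a ∈ I) (ha0 : a ≠ 0)
    (h : Ideal.span {t} * I ≤ Ideal.span {a}) :
    algebraMap D K t ∈ (I * (I : FractionalIdeal D⁰ K)⁻¹ : FractionalIdeal D⁰ K) := by
  have hI : I ≠ ⊥ := fun hbot => ha0 (by simpa [hbot] using ha)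
  have ha0' : algebraMap D K a ≠ 0 := by simpa using ha0
  have hinv : algebraMap D K t / algebraMap D K a ∈ (I : FractionalIdeal D⁰ K)⁻¹ := by
    rw [FractionalIdeal.mem_inv_iff (FractionalIdeal.coeIdeal_ne_zero.2 hI)]
    intro y hy
    obtain ⟨y, hyI, rfl⟩ := (FractionalIdeal.mem_coeIdeal _).1 hy
    obtain ⟨r, hr⟩ := Ideal.mem_span_singleton'.1
      (h (Ideal.mul_mem_mul (Ideal.mem_span_singleton_self t) hyI))
    refine (FractionalIdeal.mem_one_iff _).2 ⟨r, ?_⟩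
    rw [div_mul_eq_mul_div, eq_div_iff ha0', ← map_mul, ← map_mul, hr]
  rw [← mul_div_cancel₀ (algebraMap D K t) ha0']
  exact FractionalIdeal.mul_mem_mul (FractionalIdeal.mem_coeIdeal_of_mem D⁰ ha) hinv

namespace StarOperation

variable {D K : Type*} [CommRing D] [IsDomain D] [Field K] [Algebra D K] [IsFractionRing D K]
variable (s : StarOperation D K)

section Closure

open Classical in
/-- The ideal `I^*` for an integral ideal `I`, with the convention `⊥^* = ⊥`; the value of
`s.star` at the zero fractional ideal is unconstrained. -/
noncomputable def starIdeal (I : Ideal D) : Ideal D :=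
  if I = ⊥ then ⊥
  else (s.star (I : FractionalIdeal D⁰ K) : Submodule D K).comap (Algebra.linearMap D K)

lemma coe_starIdeal {I : Ideal D} (hI : I ≠ ⊥) :
    (s.starIdeal I : FractionalIdeal D⁰ K) = s.star (I : FractionalIdeal D⁰ K) := by
  have hI0 : (I : FractionalIdeal D⁰ K) ≠ 0 := FractionalIdeal.coeIdeal_ne_zero.2 hI
  have star_one : s.star 1 = 1 := by simpa using s.star_spanSingleton 1 one_ne_zero
  have star_le_one : s.star (I : FractionalIdeal D⁰ K) ≤ 1 := by
    rw [← star_one]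
    exact s.star_mono _ _ hI0 one_ne_zero FractionalIdeal.coeIdeal_le_one
  obtain ⟨A, hA⟩ := FractionalIdeal.le_one_iff_exists_coeIdeal.1 star_le_one
  rw [starIdeal, if_neg hI, ← hA, FractionalIdeal.coe_coeIdeal, IsLocalization.coeSubmodule,
    Submodule.comap_map_eq_of_injective (IsFractionRing.injective D K)]

lemma le_starIdeal (I : Ideal D) : I ≤ s.starIdeal I := by
  rcases eq_or_ne I ⊥ with rfl | hI
  · exact bot_le
  · rw [← FractionalIdeal.coeIdeal_le_coeIdeal K, s.coe_starIdeal hI]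
    exact s.le_star _ (FractionalIdeal.coeIdeal_ne_zero.2 hI)

/-- `I ↦ I^*` as a closure operator on the integral ideals of `D`, with `⊥` closed. -/
noncomputable def closure : ClosureOperator (Ideal D) :=
  ClosureOperator.mk' s.starIdeal
    (fun I J hIJ => by
      rcases eq_or_ne I ⊥ with rfl | hI
      · simp only [starIdeal, if_true, bot_le]
      have hJ : J ≠ ⊥ := ne_bot_of_le_ne_bot hI hIJ
      rw [← FractionalIdeal.coeIdeal_le_coeIdeal K, s.coe_starIdeal hI, s.coe_starIdeal hJ]
      exact s.star_mono _ _ (FractionalIdeal.coeIdeal_ne_zero.2 hI)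
        (FractionalIdeal.coeIdeal_ne_zero.2 hJ) ((FractionalIdeal.coeIdeal_le_coeIdeal K).2 hIJ))
    s.le_starIdeal
    (fun I => by
      rcases eq_or_ne I ⊥ with rfl | hI
      · simp only [starIdeal, if_true, le_refl]
      have hI' : s.starIdeal I ≠ ⊥ := ne_bot_of_le_ne_bot hI (s.le_starIdeal I)
      rw [← FractionalIdeal.coeIdeal_le_coeIdeal K, s.coe_starIdeal hI', s.coe_starIdeal hI,
        s.star_idem _ (FractionalIdeal.coeIdeal_ne_zero.2 hI)])

lemma coe_closure {I : Ideal D} (hI : I ≠ ⊥) :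
    (s.closure I : FractionalIdeal D⁰ K) = s.star (I : FractionalIdeal D⁰ K) :=
  s.coe_starIdeal hI

lemma closure_bot : s.closure ⊥ = ⊥ := if_pos rfl

lemma closure_ne_bot {I : Ideal D} (hI : I ≠ ⊥) : s.closure I ≠ ⊥ :=
  ne_bot_of_le_ne_bot hI (s.closure.le_closure I)

lemma star_eq_coe_iff {I A : Ideal D} (hI : I ≠ ⊥) :
    s.star (I : FractionalIdeal D⁰ K) = (A : FractionalIdeal D⁰ K) ↔ s.closure I = A := by
  rw [← s.coe_closure hI, FractionalIdeal.coeIdeal_inj]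

lemma star_eq_one_iff {I : Ideal D} (hI : I ≠ ⊥) :
    s.star (I : FractionalIdeal D⁰ K) = 1 ↔ s.closure I = ⊤ := by
  rw [← FractionalIdeal.coeIdeal_top, s.star_eq_coe_iff hI]

lemma isStarIdeal_iff {I : Ideal D} : s.IsStarIdeal I ↔ I ≠ ⊥ ∧ s.closure I = I :=
  and_congr_right fun hI => s.star_eq_coe_iff hI

lemma isFiniteTypeStarIdeal_iff {I : Ideal D} :
    s.IsFiniteTypeStarIdeal I ↔ ∃ J : Ideal D, J ≠ ⊥ ∧ J.FG ∧ s.closure J = I :=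
  exists_congr fun _ => and_congr_right fun hJ => and_congr_right fun _ => s.star_eq_coe_iff hJ

lemma isStarIdeal_closure {I : Ideal D} (hI : I ≠ ⊥) : s.IsStarIdeal (s.closure I) :=
  s.isStarIdeal_iff.2 ⟨s.closure_ne_bot hI, s.closure.idempotent I⟩

lemma closure_span_singleton (x : D) : s.closure (Ideal.span {x}) = Ideal.span {x} := by
  rcases eq_or_ne x 0 with rfl | hx
  · rw [Ideal.span_singleton_zero, s.closure_bot]
  rw [← s.star_eq_coe_iff (by simpa using hx), FractionalIdeal.coeIdeal_span_singleton]
  exact s.star_spanSingleton _ (by simpa using hx)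

lemma closure_span_singleton_mul (x : D) (I : Ideal D) :
    s.closure (Ideal.span {x} * I) = Ideal.span {x} * s.closure I := by
  rcases eq_or_ne x 0 with rfl | hx
  · rw [Ideal.span_singleton_zero, Ideal.bot_mul, Ideal.bot_mul, s.closure_bot]
  rcases eq_or_ne I ⊥ with rfl | hI
  · rw [s.closure_bot, Ideal.mul_bot, s.closure_bot]
  have hxI : Ideal.span {x} * I ≠ ⊥ := mul_ne_zero (by simpa using hx) hI
  rw [← s.star_eq_coe_iff hxI, FractionalIdeal.coeIdeal_mul, FractionalIdeal.coeIdeal_mul,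
    FractionalIdeal.coeIdeal_span_singleton, s.coe_closure hI]
  exact s.star_smul _ _ (by simpa using hx) (FractionalIdeal.coeIdeal_ne_zero.2 hI)

lemma closure_mul_closure_right (I J : Ideal D) :
    s.closure (I * s.closure J) = s.closure (I * J) := by
  refine le_antisymm ?_ (s.closure.monotone (Ideal.mul_mono_right (s.closure.le_closure J)))
  rw [← s.closure.le_closure_iff, Ideal.mul_le]
  intro x hx y hy
  have hmem : x * y ∈ s.closure (Ideal.span {x} * J) :=
    s.closure_span_singleton_mul x J ▸ Ideal.mul_mem_mul (Ideal.mem_span_singleton_self x) hy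
  have hxI : Ideal.span {x} ≤ I := (Ideal.span_singleton_le_iff_mem I).2 hx
  exact s.closure.monotone (Ideal.mul_mono_left hxI) hmem

lemma closure_mul_closure_left (I J : Ideal D) :
    s.closure (s.closure I * J) = s.closure (I * J) := by
  rw [mul_comm, s.closure_mul_closure_right, mul_comm]

lemma closure_mul_closure (I J : Ideal D) :
    s.closure (s.closure I * s.closure J) = s.closure (I * J) := by
  rw [s.closure_mul_closure_left, s.closure_mul_closure_right]

lemma closure_closure_pow (I : Ideal D) (n : ℕ) :
    s.closure (s.closure I ^ n) = s.closure (I ^ n) := by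
  induction n with
  | zero => rw [pow_zero, pow_zero]
  | succ n ih => rw [pow_succ, pow_succ, ← s.closure_mul_closure_left, ih, s.closure_mul_closure]

lemma isPrincipal_closure_of_mul {I J : Ideal D} {z : D} (hz : z ≠ 0)
    (hIJ : s.closure (I * J) = Ideal.span {z}) (hI : (s.closure I).IsPrincipal) :
    (s.closure J).IsPrincipal := by
  obtain ⟨d, hd⟩ := hI
  rw [Ideal.submodule_span_eq] at hd
  have hdJ : Ideal.span {d} * s.closure J = Ideal.span {z} := by
    rw [← s.closure_span_singleton_mul, ← hd, s.closure_mul_closure_left, hIJ]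
  obtain ⟨c, -, rfl⟩ := Ideal.mem_span_singleton_mul.1 (hdJ ▸ Ideal.mem_span_singleton_self z)
  have hd0 : d ≠ 0 := left_ne_zero_of_mul hz
  rw [← Ideal.span_singleton_mul_span_singleton, Ideal.span_singleton_mul_right_inj hd0] at hdJ
  exact ⟨c, hdJ⟩

end Closure

section FiniteCharacter

variable {s}

lemma FiniteCharacter.exists_fg_le_mem_closure (hs : s.FiniteCharacter) {I : Ideal D} {x : D}
    (hx : x ∈ s.closure I) : ∃ J ≤ I, J.FG ∧ x ∈ s.closure J := by
  rcases eq_or_ne I ⊥ with rfl | hI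
  · exact ⟨⊥, le_rfl, Submodule.fg_bot, hx⟩
  have hx' : algebraMap D K x ∈ s.star (I : FractionalIdeal D⁰ K) :=
    s.coe_closure hI ▸ FractionalIdeal.mem_coeIdeal_of_mem D⁰ hx
  obtain ⟨J, hJ0, hJ, hJI, hxJ⟩ := hs _ (FractionalIdeal.coeIdeal_ne_zero.2 hI) _ hx'
  obtain ⟨J, rfl⟩ := FractionalIdeal.le_one_iff_exists_coeIdeal.1
    (hJI.trans FractionalIdeal.coeIdeal_le_one)
  refine ⟨J, (FractionalIdeal.coeIdeal_le_coeIdeal K).1 hJI,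
    (FractionalIdeal.coeIdeal_fg D⁰ (IsFractionRing.injective D K) J).1 hJ, ?_⟩
  rw [← s.coe_closure (FractionalIdeal.coeIdeal_ne_zero.1 hJ0)] at hxJ
  obtain ⟨y, hy, hyx⟩ := (FractionalIdeal.mem_coeIdeal _).1 hxJ
  exact IsFractionRing.injective D K hyx ▸ hy

lemma FiniteCharacter.closure_sSup_of_directedOn (hs : s.FiniteCharacter) {C : Set (Ideal D)}
    (hC : C.Nonempty) (hdir : DirectedOn (· ≤ ·) C) (hclosed : ∀ I ∈ C, s.closure I = I) :
    s.closure (sSup C) = sSup C := by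
  refine le_antisymm (fun x hx => ?_) (s.closure.le_closure _)
  obtain ⟨J, hJC, hJ, hxJ⟩ := hs.exists_fg_le_mem_closure hx
  obtain ⟨I, hI, hJI⟩ := (CompleteLattice.isCompactElement_iff_le_of_directed_sSup_le _ J).1
    ((Submodule.fg_iff_compact J).1 hJ) C hC hdir hJC
  exact le_sSup hI (hclosed I hI ▸ s.closure.monotone hJI hxJ)

lemma FiniteCharacter.exists_isMaxStarIdeal_le (hs : s.FiniteCharacter) {I : Ideal D}
    (hI : s.IsStarIdeal I) (hI' : I ≠ ⊤) : ∃ M, s.IsMaxStarIdeal M ∧ I ≤ M := by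
  obtain ⟨M, hIM, hM⟩ := zorn_le_nonempty₀ {J : Ideal D | J ≠ ⊤ ∧ s.IsStarIdeal J}
    (fun C hC hchain J hJ => by
      have hclosed : s.closure (sSup C) = sSup C := hs.closure_sSup_of_directedOn ⟨J, hJ⟩
        hchain.directedOn fun I hI => (s.isStarIdeal_iff.1 (hC hI).2).2
      have hbot : sSup C ≠ ⊥ := ne_bot_of_le_ne_bot (hC hJ).2.1 (le_sSup hJ)
      have htop : sSup C ≠ ⊤ := fun h => by
        obtain ⟨I, hI, hI1⟩ := (Submodule.mem_sSup_of_directed ⟨J, hJ⟩ hchain.directedOn).1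
          ((Ideal.eq_top_iff_one _).1 h)
        exact (hC hI).1 ((Ideal.eq_top_iff_one I).2 hI1)
      exact ⟨sSup C, ⟨htop, s.isStarIdeal_iff.2 ⟨hbot, hclosed⟩⟩, fun _ => le_sSup⟩)
    I ⟨hI', hI⟩
  exact ⟨M, ⟨hM.prop.1, hM.prop.2, fun J hJ hJs hMJ => (hM.eq_of_le ⟨hJ, hJs⟩ hMJ).symm⟩, hIM⟩

end FiniteCharacter

section MaxSpectrum

variable {s}

lemma IsMaxStarIdeal.isPrime {M : Ideal D} (hM : s.IsMaxStarIdeal M) : M.IsPrime := by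
  obtain ⟨hM_top, hM_star, hmax⟩ := hM
  obtain ⟨hM_bot, hM_closed⟩ := s.isStarIdeal_iff.1 hM_star
  refine ⟨hM_top, fun {x y} hxy => or_iff_not_imp_left.2 fun hx => ?_⟩
  have hclosure : s.closure (M ⊔ Ideal.span {x}) = ⊤ := by
    by_contra htop
    have hMx : M ⊔ Ideal.span {x} ≤ s.closure (M ⊔ Ideal.span {x}) := s.closure.le_closure _
    have heq := hmax _ htop (s.isStarIdeal_closure (ne_bot_of_le_ne_bot hM_bot le_sup_left))
      (le_sup_left.trans hMx)
    exact hx (heq ▸ hMx (Ideal.mem_sup_right (Ideal.mem_span_singleton_self x)))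
  have hle : Ideal.span {y} * (M ⊔ Ideal.span {x}) ≤ M := by
    rw [Ideal.mul_sup, Ideal.span_singleton_mul_span_singleton, sup_le_iff,
      Ideal.span_singleton_le_iff_mem, mul_comm y x]
    exact ⟨Ideal.mul_le_right, hxy⟩
  have := s.closure.monotone hle
  rwa [s.closure_span_singleton_mul, hclosure, Ideal.mul_top, hM_closed,
    Ideal.span_singleton_le_iff_mem] at this

variable (s) in
/-- The maximal `*`-ideals of `D`, bundled so that localizing at them needs no side proof of
primality. -/
abbrev MaxSpectrum : Type _ := {M : Ideal D // s.IsMaxStarIdeal M}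

instance (P : s.MaxSpectrum) : P.1.IsPrime := P.2.isPrime

lemma MaxSpectrum.closure_le_iff (P : s.MaxSpectrum) {I : Ideal D} :
    s.closure I ≤ P.1 ↔ I ≤ P.1 := by
  conv_lhs => rw [← (s.isStarIdeal_iff.1 P.2.2.1).2, ← s.closure.le_closure_iff,
    (s.isStarIdeal_iff.1 P.2.2.1).2]

lemma FiniteCharacter.closure_eq_top_iff (hs : s.FiniteCharacter) {I : Ideal D} (hI : I ≠ ⊥) :
    s.closure I = ⊤ ↔ ∀ P : s.MaxSpectrum, ¬ I ≤ P.1 := by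
  refine ⟨fun h P hIP => P.2.1 (top_le_iff.1 (h ▸ P.closure_le_iff.2 hIP)), fun h => ?_⟩
  by_contra htop
  obtain ⟨P, hP, hle⟩ := hs.exists_isMaxStarIdeal_le (s.isStarIdeal_closure hI) htop
  exact h ⟨P, hP⟩ ((s.closure.le_closure I).trans hle)

lemma FiniteCharacter.le_closure_of_localize_le (hs : s.FiniteCharacter) {I J : Ideal D}
    (hJ : J ≠ ⊥) (h : ∀ P : s.MaxSpectrum, localize P.1 I ≤ localize P.1 J) :
    I ≤ s.closure J := by
  intro x hx
  have hJ_colon : J ≤ J.colon {x} := fun t ht =>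
    Submodule.mem_colon_singleton.2 (J.mul_mem_right x ht)
  have hcolon : s.closure (J.colon {x}) = ⊤ := by
    refine (hs.closure_eq_top_iff (ne_bot_of_le_ne_bot hJ hJ_colon)).2 fun P hP => ?_
    obtain ⟨t, ht, htx⟩ := algebraMap_mem_localize.1 (h P (Ideal.mem_map_of_mem _ hx))
    exact ht (hP (Submodule.mem_colon_singleton.2 htx))
  have hle : Ideal.span {x} * J.colon {x} ≤ J := Ideal.span_singleton_mul_le_iff.2
    fun t ht => mul_comm x t ▸ Submodule.mem_colon_singleton.1 ht
  have := s.closure.monotone hle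
  rwa [s.closure_span_singleton_mul, hcolon, Ideal.mul_top,
    Ideal.span_singleton_le_iff_mem] at this

lemma FiniteCharacter.closure_eq_of_localize_eq (hs : s.FiniteCharacter) {I J : Ideal D}
    (hI : I ≠ ⊥) (hJ : J ≠ ⊥) (h : ∀ P : s.MaxSpectrum, localize P.1 I = localize P.1 J) :
    s.closure I = s.closure J :=
  le_antisymm (s.closure.le_closure_iff.1 (hs.le_closure_of_localize_le hJ fun P => (h P).le))
    (s.closure.le_closure_iff.1 (hs.le_closure_of_localize_le hI fun P => (h P).ge))

end MaxSpectrum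

section PruferMultiplicationDomain

variable {s}

variable (s) in
/-- `D` is a Prüfer `*`-multiplication domain, in the local form: its localization at each maximal
`*`-ideal is a valuation domain. -/
def IsPruferMultiplicationDomain : Prop :=
  ∀ P : s.MaxSpectrum, ValuationRing (Localization.AtPrime P.1)

variable (s) in
/-- Some positive `*`-power `(Iⁿ)^*` of `I` is principal; for `*`-invertible `I` this says that the
class of `I` in the `*`-class group is torsion. -/
def HasPrincipalPower (I : Ideal D) : Prop :=
  ∃ n : ℕ, 0 < n ∧ (s.closure (I ^ n)).IsPrincipal

lemma hasPrincipalPower_iff_exists_star_eq {I : Ideal D} (hI : I ≠ ⊥) :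
    s.HasPrincipalPower I ↔ ∃ n : ℕ, 0 < n ∧ ∃ d : D,
      s.star ((I ^ n : Ideal D) : FractionalIdeal D⁰ K) =
        ((Ideal.span {d} : Ideal D) : FractionalIdeal D⁰ K) := by
  simp only [s.star_eq_coe_iff (pow_ne_zero _ hI), HasPrincipalPower,
    Submodule.isPrincipal_iff, Ideal.submodule_span_eq]

lemma hasPrincipalPower_closure {I : Ideal D} :
    s.HasPrincipalPower (s.closure I) ↔ s.HasPrincipalPower I := by
  simp only [HasPrincipalPower, closure_closure_pow]

lemma HasPrincipalPower.mul {I J : Ideal D} (hI : s.HasPrincipalPower I)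
    (hJ : s.HasPrincipalPower J) : s.HasPrincipalPower (I * J) := by
  obtain ⟨n, hn, d, hd⟩ := hI
  obtain ⟨m, hm, e, he⟩ := hJ
  rw [Ideal.submodule_span_eq] at hd he
  refine ⟨n * m, Nat.mul_pos hn hm, d ^ m * e ^ n, ?_⟩
  rw [mul_pow, pow_mul I, mul_comm n m, pow_mul J, ← s.closure_mul_closure,
    ← s.closure_closure_pow (I ^ n), ← s.closure_closure_pow (J ^ m), hd, he,
    s.closure_mul_closure, Ideal.span_singleton_pow, Ideal.span_singleton_pow,
    Ideal.span_singleton_mul_span_singleton, s.closure_span_singleton, Ideal.submodule_span_eq]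

lemma HasPrincipalPower.prod {ι : Type*} {F : Finset ι} {I : ι → Ideal D}
    (h : ∀ i ∈ F, s.HasPrincipalPower (I i)) : s.HasPrincipalPower (∏ i ∈ F, I i) :=
  Finset.prod_induction I s.HasPrincipalPower (fun _ _ => HasPrincipalPower.mul)
    ⟨1, one_pos, by rw [one_pow, Ideal.one_eq_top, s.closure.closure_top]; exact top_isPrincipal⟩ h

namespace IsPruferMultiplicationDomain

lemma closure_sup_pow (hD : s.IsPruferMultiplicationDomain) (hs : s.FiniteCharacter)
    (I J : Ideal D) (n : ℕ) : s.closure ((I ⊔ J) ^ n) = s.closure (I ^ n ⊔ J ^ n) := by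
  rcases eq_or_ne I ⊥ with rfl | hI
  · rcases eq_or_ne n 0 with rfl | hn
    · simp only [pow_zero, sup_idem]
    · rw [bot_sup_eq, ← Ideal.zero_eq_bot, zero_pow hn, Ideal.zero_eq_bot, bot_sup_eq]
  refine hs.closure_eq_of_localize_eq (pow_ne_zero n (ne_bot_of_le_ne_bot hI le_sup_left))
    (ne_bot_of_le_ne_bot (pow_ne_zero n hI) le_sup_left) fun P => ?_
  have := hD P
  simp only [localize, Ideal.map_pow, Ideal.map_sup, sup_pow_of_preValuationRing]

lemma closure_sup_mul_inf (hD : s.IsPruferMultiplicationDomain) (hs : s.FiniteCharacter)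
    {I J : Ideal D} (hI : I ≠ ⊥) (hJ : J ≠ ⊥) :
    s.closure ((I ⊔ J) * (I ⊓ J)) = s.closure (I * J) := by
  have hinf : I ⊓ J ≠ ⊥ := ne_bot_of_le_ne_bot (mul_ne_zero hI hJ) Ideal.mul_le_inf
  refine hs.closure_eq_of_localize_eq (mul_ne_zero (ne_bot_of_le_ne_bot hI le_sup_left) hinf)
    (mul_ne_zero hI hJ) fun P => ?_
  have := hD P
  simp only [localize, Ideal.map_mul, Ideal.map_sup, IsLocalization.map_inf P.1.primeCompl,
    sup_mul_inf_of_preValuationRing]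

lemma isPrincipal_inf_iff (hD : s.IsPruferMultiplicationDomain) (hs : s.FiniteCharacter)
    {a b : D} (ha : a ≠ 0) (hb : b ≠ 0) :
    (Ideal.span {a} ⊓ Ideal.span {b}).IsPrincipal ↔
      (s.closure (Ideal.span {a} ⊔ Ideal.span {b})).IsPrincipal := by
  have hmul : s.closure ((Ideal.span {a} ⊔ Ideal.span {b}) * (Ideal.span {a} ⊓ Ideal.span {b})) =
      Ideal.span {a * b} := by
    rw [hD.closure_sup_mul_inf hs (by simpa using ha) (by simpa using hb),
      Ideal.span_singleton_mul_span_singleton, s.closure_span_singleton]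
  have hinf : s.closure (Ideal.span {a} ⊓ Ideal.span {b}) = Ideal.span {a} ⊓ Ideal.span {b} := by
    refine le_antisymm ((s.closure.closure_inf_le _ _).trans ?_) (s.closure.le_closure _)
    rw [s.closure_span_singleton, s.closure_span_singleton]
  refine ⟨fun h => s.isPrincipal_closure_of_mul (mul_ne_zero ha hb) (by rw [mul_comm, hmul])
    (hinf.symm ▸ h), fun h => ?_⟩
  exact hinf ▸ s.isPrincipal_closure_of_mul (mul_ne_zero ha hb) hmul h

lemma hasPrincipalPower_sup (hD : s.IsPruferMultiplicationDomain) (hs : s.FiniteCharacter)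
    (hagcd : IsAGCDDomain D) {I J : Ideal D} (hI : s.HasPrincipalPower I)
    (hJ : s.HasPrincipalPower J) : s.HasPrincipalPower (I ⊔ J) := by
  obtain ⟨n, hn, d, hd⟩ := hI
  obtain ⟨m, hm, e, he⟩ := hJ
  rw [Ideal.submodule_span_eq] at hd he
  have hclosure (k : ℕ) : s.closure ((I ⊔ J) ^ (n * m * k)) =
      s.closure (Ideal.span {(d ^ m) ^ k} ⊔ Ideal.span {(e ^ n) ^ k}) := by
    rw [hD.closure_sup_pow hs, ← s.closure.closure_sup_closure, mul_assoc n m k, pow_mul I,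
      ← mul_assoc n m k, mul_comm n m, mul_assoc m n k, pow_mul J,
      ← s.closure_closure_pow (I ^ n), ← s.closure_closure_pow (J ^ m), hd, he,
      s.closure.closure_sup_closure]
    simp only [Ideal.span_singleton_pow, pow_mul]
  have hprincipal : ∃ k : ℕ, 0 < k ∧
      (s.closure (Ideal.span {(d ^ m) ^ k} ⊔ Ideal.span {(e ^ n) ^ k})).IsPrincipal := by
    rcases eq_or_ne d 0 with rfl | hd0
    · exact ⟨1, one_pos, e ^ n, by
        rw [zero_pow hm.ne', zero_pow one_ne_zero, pow_one, Ideal.span_singleton_zero, bot_sup_eq,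
          s.closure_span_singleton, Ideal.submodule_span_eq]⟩
    rcases eq_or_ne e 0 with rfl | he0
    · exact ⟨1, one_pos, d ^ m, by
        rw [zero_pow hn.ne', zero_pow one_ne_zero, pow_one, Ideal.span_singleton_zero, sup_bot_eq,
          s.closure_span_singleton, Ideal.submodule_span_eq]⟩
    obtain ⟨k, hk, h⟩ := hagcd (d ^ m) (e ^ n) (pow_ne_zero m hd0) (pow_ne_zero n he0)
    exact ⟨k, hk, (hD.isPrincipal_inf_iff hs (pow_ne_zero k (pow_ne_zero m hd0))
      (pow_ne_zero k (pow_ne_zero n he0))).1 h⟩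
  obtain ⟨k, hk, h⟩ := hprincipal
  exact ⟨n * m * k, by positivity, hclosure k ▸ h⟩

theorem isAGCDDomain_iff (hD : s.IsPruferMultiplicationDomain) (hs : s.FiniteCharacter) :
    IsAGCDDomain D ↔ ∀ I : Ideal D, I.FG → s.HasPrincipalPower I := by
  refine ⟨fun hagcd I hI => ?_, fun h a b ha hb => ?_⟩
  · induction I, hI using Submodule.fg_induction with
    | singleton x =>
      exact ⟨1, one_pos, x, by rw [pow_one, Ideal.submodule_span_eq, s.closure_span_singleton]⟩
    | sup I J _ _ hI hJ => exact hD.hasPrincipalPower_sup hs hagcd hI hJ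
  · obtain ⟨n, hn, hprincipal⟩ := h (Ideal.span {a} ⊔ Ideal.span {b})
      ((Submodule.fg_span_singleton a).sup (Submodule.fg_span_singleton b))
    rw [hD.closure_sup_pow hs, Ideal.span_singleton_pow, Ideal.span_singleton_pow] at hprincipal
    exact ⟨n, hn, (hD.isPrincipal_inf_iff hs (pow_ne_zero n ha) (pow_ne_zero n hb)).2 hprincipal⟩

end IsPruferMultiplicationDomain

end PruferMultiplicationDomain

section Homogeneous

variable {s}

lemma FiniteCharacter.starInvertible_of_forall_exists_notMem (hs : s.FiniteCharacter) {I : Ideal D}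
    (hI : I ≠ ⊥) (h : ∀ P : s.MaxSpectrum, ∃ t ∉ P.1,
      algebraMap D K t ∈ (I * (I : FractionalIdeal D⁰ K)⁻¹ : FractionalIdeal D⁰ K)) :
    s.StarInvertible I := by
  have hle_one : (I * (I : FractionalIdeal D⁰ K)⁻¹ : FractionalIdeal D⁰ K) ≤ 1 := by
    rw [FractionalIdeal.inv_eq]
    exact FractionalIdeal.mul_one_div_le_one
  obtain ⟨C, hC⟩ := FractionalIdeal.le_one_iff_exists_coeIdeal.1 hle_one
  have hI_le : I ≤ C := by
    rw [← FractionalIdeal.coeIdeal_le_coeIdeal K, hC]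
    exact FractionalIdeal.coe_ideal_le_self_mul_inv K I
  have hC0 : C ≠ ⊥ := ne_bot_of_le_ne_bot hI hI_le
  rw [StarInvertible, ← hC, s.star_eq_one_iff hC0, hs.closure_eq_top_iff hC0]
  intro P hCP
  obtain ⟨t, htP, ht⟩ := h P
  obtain ⟨t', ht', htt'⟩ := (FractionalIdeal.mem_coeIdeal _).1 (hC ▸ ht)
  exact htP (IsFractionRing.injective D K htt' ▸ hCP ht')

lemma IsPruferMultiplicationDomain.starInvertible_closure (hD : s.IsPruferMultiplicationDomain)
    (hs : s.FiniteCharacter) {I : Ideal D} (hI : I ≠ ⊥) (hIfg : I.FG) :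
    s.StarInvertible (s.closure I) := by
  refine hs.starInvertible_of_forall_exists_notMem (s.closure_ne_bot hI) fun P => ?_
  have := hD P
  obtain ⟨a, haI, ha⟩ := exists_mem_localize_eq_span_singleton (P := P.1) hIfg
  obtain ⟨t, htP, hle⟩ := exists_span_singleton_mul_le hIfg ha.le
  have ht0 : t ≠ 0 := fun h => htP (h ▸ P.1.zero_mem)
  have ha0 : a ≠ 0 := by
    rintro rfl
    rw [Ideal.span_singleton_zero, le_bot_iff] at hle
    exact mul_ne_zero (by simpa using ht0) hI hle
  refine ⟨t, htP, algebraMap_mem_mul_inv K (s.closure.le_closure I haI) ha0 ?_⟩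
  rw [← s.closure_span_singleton_mul, ← s.closure_span_singleton a]
  exact s.closure.monotone hle

lemma FiniteCharacter.isHomog_closure (hs : s.FiniteCharacter) {I : Ideal D} (hI : I ≠ ⊥)
    (hIfg : I.FG) {P : s.MaxSpectrum} (hIP : I ≤ P.1)
    (hP : ∀ Q : s.MaxSpectrum, I ≤ Q.1 → Q = P) : s.IsHomog (s.closure I) := by
  have le_of_le {J : Ideal D} (hJ : J ≠ ⊤) (hJs : s.IsStarIdeal J) (hIJ : s.closure I ≤ J) :
      J ≤ P.1 := by
    obtain ⟨M, hM, hJM⟩ := hs.exists_isMaxStarIdeal_le hJs hJ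
    exact hP ⟨M, hM⟩ ((s.closure.le_closure I).trans (hIJ.trans hJM)) ▸ hJM
  refine ⟨fun htop => P.2.1 (top_le_iff.1 (htop ▸ P.closure_le_iff.2 hIP)),
    s.isStarIdeal_closure hI, s.isFiniteTypeStarIdeal_iff.2 ⟨I, hI, hIfg, rfl⟩,
    fun J J' hJ hJ' hJs hJs' _ _ hIJ hIJ' => ?_⟩
  have hsup : J + J' ≠ ⊥ := ne_bot_of_le_ne_bot hJs.1 le_sup_left
  rw [Ne, s.star_eq_one_iff hsup, hs.closure_eq_top_iff hsup, not_forall_not]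
  exact ⟨P, sup_le (le_of_le hJ hJs hIJ) (le_of_le hJ' hJs' hIJ')⟩

lemma IsPruferMultiplicationDomain.isSuperHomog_closure (hD : s.IsPruferMultiplicationDomain)
    (hs : s.FiniteCharacter) {I : Ideal D} (hI : I ≠ ⊥) (hIfg : I.FG) {P : s.MaxSpectrum}
    (hIP : I ≤ P.1) (hP : ∀ Q : s.MaxSpectrum, I ≤ Q.1 → Q = P) :
    s.IsSuperHomog (s.closure I) := by
  refine ⟨hs.isHomog_closure hI hIfg hIP hP, fun J _ hJft _ => ?_⟩
  obtain ⟨J, hJ, hJfg, rfl⟩ := s.isFiniteTypeStarIdeal_iff.1 hJft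
  exact hD.starInvertible_closure hs hJ hJfg

end Homogeneous

section IndependentRingOfKrullType

variable {s}

lemma FiniteStarCharacter.finite_setOf_le (hfin : s.FiniteStarCharacter) {I : Ideal D}
    (hI : I ≠ ⊥) : {P : s.MaxSpectrum | I ≤ P.1}.Finite := by
  obtain ⟨x, hxI, hx⟩ := Submodule.exists_mem_ne_zero_of_ne_bot hI
  by_cases hunit : IsUnit x
  · refine Set.finite_empty.subset fun P hP => P.2.1 ?_
    exact Ideal.eq_top_of_isUnit_mem _ (hP hxI) hunit
  · exact ((hfin x hx hunit).preimage Subtype.val_injective.injOn).subset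
      fun P hP => ⟨P.2, hP hxI⟩

variable (s) in
/-- Independence of the maximal `*`-ideals, as in Griffin's independent rings of Krull type:
distinct ones contain no common nonzero prime. -/
def HasIndependentMaxSpectrum : Prop :=
  ∀ P Q : s.MaxSpectrum, P ≠ Q → ∀ L : Ideal D, L.IsPrime → L ≠ ⊥ → ¬ L ≤ P.1 ⊓ Q.1

lemma HasIndependentMaxSpectrum.exists_localize_eq_and_forall_le_eq
    (hind : s.HasIndependentMaxSpectrum) (hfin : s.FiniteStarCharacter) {I : Ideal D}
    (hI : I ≠ ⊥) (hIfg : I.FG) (P : s.MaxSpectrum) :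
    ∃ B : Ideal D, I ≤ B ∧ B.FG ∧ localize P.1 B = localize P.1 I ∧
      ∀ Q : s.MaxSpectrum, B ≤ Q.1 → Q = P := by
  have hsep (Q : s.MaxSpectrum) (hQ : Q ≠ P) :
      ∃ t ∉ Q.1, algebraMap D (Localization.AtPrime P.1) t ∈ localize P.1 I :=
    exists_notMem_algebraMap_mem_localize (hind P Q hQ.symm) hI
  choose! t htQ htI using hsep
  let T : Set D := t '' ({Q | I ≤ Q.1} \ {P})
  have hT : (Ideal.span T).FG :=
    Submodule.fg_span ((hfin.finite_setOf_le hI).sdiff.image t)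
  refine ⟨I ⊔ Ideal.span T, le_sup_left, Submodule.FG.sup hIfg hT, ?_, fun Q hQ => ?_⟩
  · rw [localize, Ideal.map_sup, sup_eq_left, Ideal.map_span, Ideal.span_le]
    rintro _ ⟨_, ⟨Q, hQ, rfl⟩, rfl⟩
    exact htI Q hQ.2
  · by_contra hQP
    have htT : t Q ∈ T := ⟨Q, ⟨le_sup_left.trans hQ, hQP⟩, rfl⟩
    exact htQ Q hQP (hQ (Ideal.mem_sup_right (Ideal.subset_span htT)))

namespace IsIRKT

lemma isPruferMultiplicationDomain (hD : s.IsIRKT) : s.IsPruferMultiplicationDomain :=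
  fun P => hD.1 P.1 P.2

lemma finiteStarCharacter (hD : s.IsIRKT) : s.FiniteStarCharacter := hD.2.2.1

lemma hasIndependentMaxSpectrum (hD : s.IsIRKT) : s.HasIndependentMaxSpectrum :=
  fun P Q hPQ => hD.2.2.2 P.1 Q.1 P.2 Q.2 (Subtype.val_injective.ne hPQ)

lemma exists_closure_prod_eq (hD : s.IsIRKT) (hs : s.FiniteCharacter) {I : Ideal D} (hI : I ≠ ⊥)
    (hIfg : I.FG) : ∃ (F : Finset s.MaxSpectrum) (B : s.MaxSpectrum → Ideal D),
      (∀ P ∈ F, s.IsSuperHomog (s.closure (B P))) ∧ s.closure (∏ P ∈ F, B P) = s.closure I := by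
  choose B hIB hBfg hB_self hB using
    hD.hasIndependentMaxSpectrum.exists_localize_eq_and_forall_le_eq hD.finiteStarCharacter hI hIfg
  let F := (hD.finiteStarCharacter.finite_setOf_le hI).toFinset
  have mem_F {P : s.MaxSpectrum} : P ∈ F ↔ I ≤ P.1 := Set.Finite.mem_toFinset _
  have hB0 (P : s.MaxSpectrum) : B P ≠ ⊥ := ne_bot_of_le_ne_bot hI (hIB P)
  have hB_le_iff (P : s.MaxSpectrum) : B P ≤ P.1 ↔ I ≤ P.1 := by
    rw [← not_iff_not, ← localize_eq_top_iff, ← localize_eq_top_iff, hB_self]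
  have hB_other {P Q : s.MaxSpectrum} (h : P ≠ Q) : localize Q.1 (B P) = 1 := by
    rw [Ideal.one_eq_top, localize_eq_top_iff]
    exact fun hle => h (hB P Q hle).symm
  have hprod (Q : s.MaxSpectrum) : localize Q.1 (∏ P ∈ F, B P) = localize Q.1 I :=
    calc localize Q.1 (∏ P ∈ F, B P)
      _ = ∏ P ∈ F, localize Q.1 (B P) := map_prod (Ideal.mapHom _) B F
      _ = localize Q.1 (B Q) := Finset.prod_eq_single Q (fun P _ hPQ => hB_other hPQ) fun hQ => by
        rwa [Ideal.one_eq_top, localize_eq_top_iff, hB_le_iff, ← mem_F]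
      _ = localize Q.1 I := hB_self Q
  exact ⟨F, B, fun P hP => hD.isPruferMultiplicationDomain.isSuperHomog_closure hs (hB0 P) (hBfg P)
    ((hB_le_iff P).2 (mem_F.1 hP)) (hB P), hs.closure_eq_of_localize_eq
      (Finset.prod_ne_zero_iff.2 fun P _ => hB0 P) hI hprod⟩

theorem forall_fg_hasPrincipalPower_iff (hD : s.IsIRKT) (hs : s.FiniteCharacter) :
    (∀ I : Ideal D, I.FG → s.HasPrincipalPower I) ↔
      ∀ A : Ideal D, s.IsSuperHomog A → s.HasPrincipalPower A := by
  refine ⟨fun h A hA => ?_, fun h I hIfg => ?_⟩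
  · obtain ⟨J, -, hJfg, rfl⟩ := s.isFiniteTypeStarIdeal_iff.1 hA.1.2.2.1
    exact hasPrincipalPower_closure.2 (h J hJfg)
  · rcases eq_or_ne I ⊥ with rfl | hI
    · exact ⟨1, one_pos, by rw [pow_one, s.closure_bot]; exact bot_isPrincipal⟩
    obtain ⟨F, B, hB, hprod⟩ := hD.exists_closure_prod_eq hs hI hIfg
    rw [← hasPrincipalPower_closure, ← hprod, hasPrincipalPower_closure]
    exact HasPrincipalPower.prod fun P hP => hasPrincipalPower_closure.1 (h _ (hB P hP))

end IsIRKT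

end IndependentRingOfKrullType

end StarOperation

/-- A `*`-IRKT `D` is an AGCD domain iff for every `*`-super homogeneous
ideal `A` of `D` there is a positive integer `n` such that `(Aⁿ)^*` is principal. -/
theorem IRKT_AGCD_iff {D K : Type*} [CommRing D] [IsDomain D] [Field K]
    [Algebra D K] [IsFractionRing D K] (s : StarOperation D K) (hs : s.FiniteCharacter)
    (hD : s.IsIRKT) :
    (∀ a b : D, a ≠ 0 → b ≠ 0 → ∃ n : ℕ, 0 < n ∧
      (Ideal.span {a ^ n} ⊓ Ideal.span {b ^ n} : Ideal D).IsPrincipal) ↔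
    (∀ A : Ideal D, s.IsSuperHomog A → ∃ n : ℕ, 0 < n ∧ ∃ d : D,
      s.star ((A ^ n : Ideal D) : FractionalIdeal D⁰ K) =
        ((Ideal.span {d} : Ideal D) : FractionalIdeal D⁰ K)) := by
  calc IsAGCDDomain D
    _ ↔ ∀ I : Ideal D, I.FG → s.HasPrincipalPower I :=
      hD.isPruferMultiplicationDomain.isAGCDDomain_iff hs
    _ ↔ ∀ A : Ideal D, s.IsSuperHomog A → s.HasPrincipalPower A :=
      hD.forall_fg_hasPrincipalPower_iff hs
    _ ↔ _ := forall₂_congr fun _ hA => StarOperation.hasPrincipalPower_iff_exists_star_eq hA.1.2.1.1
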